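/- arXiv:1807.06948 — 5 statements merged into one kernel-verified Lean document; each statement's English description precedes it below -/
import Mathlib

section
/- Let s > 1/2. There exists a constant C = C(s) such that for all sequences M, N, P ∈ ℓ^{2,s}(ℤ), the sequence Q(k) := ∑_{(j₁,j₂,j₃)∈ℤ³, k−j₁+j₂−j₃=0} M_{j₁} N_{j₂} P_{j₃} is absolutely convergent for each k ∈ ℤ and satisfies sup_{k∈ℤ} |Q(k)| + ‖Q‖_{ℓ^{2,s}} ≤ C ‖M‖_{ℓ^{2,s}} ‖N‖_{ℓ^{2,s}} ‖P‖_{ℓ^{2,s}}. -/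
open scoped BigOperators

/-- Membership in the weighted space `ℓ^{2,s}(ℤ)`. -/
def wMem (s : ℝ) (a : ℤ → ℂ) : Prop :=
  Summable (fun k : ℤ => (1 + |(k : ℝ)|) ^ (2 * s) * ‖a k‖ ^ 2)

/-- The `ℓ^{2,s}(ℤ)` norm. -/
noncomputable def wnorm (s : ℝ) (a : ℤ → ℂ) : ℝ :=
  (∑' k : ℤ, (1 + |(k : ℝ)|) ^ (2 * s) * ‖a k‖ ^ 2) ^ (1 / 2 : ℝ)

/-- The triple convolution-type sum `Q(k) = ∑_{k - j₁ + j₂ - j₃ = 0} M_{j₁} N_{j₂} P_{j₃}`,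
parametrized by the two free indices `(j₁, j₂)`, with `j₃ = k - j₁ + j₂`. -/
noncomputable def tripleSum (M N P : ℤ → ℂ) (k : ℤ) : ℂ :=
  ∑' j : ℤ × ℤ, M j.1 * N j.2 * P (k - j.1 + j.2)

open scoped ENNReal

/-- The weight, as an extended nonnegative real. -/
noncomputable def wgt (s : ℝ) (k : ℤ) : ℝ≥0∞ := ENNReal.ofReal ((1 + |(k : ℝ)|) ^ s)

lemma wgt_pos_real (k : ℤ) : (0 : ℝ) < 1 + |(k : ℝ)| := by positivity

lemma wgt_ne_zero (s : ℝ) (k : ℤ) : wgt s k ≠ 0 := by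
  unfold wgt
  have := Real.rpow_pos_of_pos (wgt_pos_real k) s
  simpa using this

lemma wgt_ne_top (s : ℝ) (k : ℤ) : wgt s k ≠ ⊤ := ENNReal.ofReal_ne_top

lemma wgt_sq (s : ℝ) (k : ℤ) : wgt s k ^ 2 = ENNReal.ofReal ((1 + |(k : ℝ)|) ^ (2 * s)) := by
  unfold wgt
  rw [← ENNReal.ofReal_pow (Real.rpow_nonneg (wgt_pos_real k).le _), mul_comm 2 s,
    Real.rpow_mul (wgt_pos_real k).le]
  norm_num

lemma one_le_wgt_sq (s : ℝ) (hs : 1 / 2 < s) (k : ℤ) : 1 ≤ wgt s k ^ 2 := by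
  rw [wgt_sq]
  rw [ENNReal.one_le_ofReal]
  apply Real.one_le_rpow
  · have := abs_nonneg (k : ℝ); linarith
  · linarith

lemma wgt_inv_sq (s : ℝ) (k : ℤ) :
    ((wgt s k)⁻¹) ^ 2 = ENNReal.ofReal (1 / (1 + |(k : ℝ)|) ^ (2 * s)) := by
  rw [one_div, ENNReal.ofReal_inv_of_pos (Real.rpow_pos_of_pos (wgt_pos_real k) _), ← wgt_sq,
    ENNReal.inv_pow]

lemma summable_inv_wgt (s : ℝ) (hs : 1 / 2 < s) :
    Summable (fun k : ℤ => 1 / (1 + |(k : ℝ)|) ^ (2 * s)) := by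
  have h := (Real.summable_one_div_nat_add_rpow 1 (2 * s)).2 (by linarith)
  have e : (fun n : ℕ => 1 / |(n : ℝ) + 1| ^ (2 * s)) =
      fun n : ℕ => 1 / (1 + (n : ℝ)) ^ (2 * s) := by
    funext n
    rw [abs_of_nonneg (by positivity), add_comm]
  rw [e] at h
  apply Summable.of_nat_of_neg
  · simpa using h
  · simpa using h

lemma tsum_inv_wgt_ne_top (s : ℝ) (hs : 1 / 2 < s) : ∑' k : ℤ, ((wgt s k)⁻¹) ^ 2 ≠ ⊤ := by
  simp_rw [wgt_inv_sq]
  rw [← ENNReal.ofReal_tsum_of_nonneg _ (summable_inv_wgt s hs)]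
  · exact ENNReal.ofReal_ne_top
  · intro k; have := wgt_pos_real k; positivity

lemma wgt_sub (s : ℝ) (hs : 1 / 2 < s) (k a b : ℤ) :
    wgt s k ^ 2 ≤ ENNReal.ofReal (3 ^ (2 * s)) *
      (wgt s a ^ 2 + wgt s b ^ 2 + wgt s (k - a + b) ^ 2) := by
  simp only [wgt_sq]
  have pa := wgt_pos_real a
  have pb := wgt_pos_real b
  have pc := wgt_pos_real (k - a + b)
  have pk := wgt_pos_real k
  have qa := Real.rpow_nonneg pa.le (2 * s)
  have qb := Real.rpow_nonneg pb.le (2 * s)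
  have qc := Real.rpow_nonneg pc.le (2 * s)
  rw [← ENNReal.ofReal_add qa qb, ← ENNReal.ofReal_add (by positivity) qc,
    ← ENNReal.ofReal_mul (by positivity)]
  apply ENNReal.ofReal_le_ofReal
  have h : |(k : ℝ)| ≤ |(a : ℝ)| + |(b : ℝ)| + |((k - a + b : ℤ) : ℝ)| := by
    have : (k : ℝ) = a - b + ((k - a + b : ℤ) : ℝ) := by push_cast; ring
    calc |(k : ℝ)| = |(a : ℝ) - b + ((k - a + b : ℤ) : ℝ)| := by rw [← this]
      _ ≤ |(a : ℝ) - b| + |((k - a + b : ℤ) : ℝ)| := abs_add_le _ _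
      _ ≤ _ := by gcongr; exact abs_sub _ _
  have key : ∀ y : ℝ, 0 < y → 1 + |(k : ℝ)| ≤ 3 * y →
      (1 + |(k : ℝ)|) ^ (2 * s) ≤ 3 ^ (2 * s) * y ^ (2 * s) := by
    intro y hy hle
    rw [← Real.mul_rpow (by norm_num) hy.le]
    exact Real.rpow_le_rpow pk.le hle (by linarith)
  have h3 : (0 : ℝ) ≤ 3 ^ (2 * s) := by positivity
  have ra := mul_nonneg h3 qa
  have rb := mul_nonneg h3 qb
  have rc := mul_nonneg h3 qc
  by_cases c1 : 1 + |(k : ℝ)| ≤ 3 * (1 + |(a : ℝ)|)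
  · have := key _ pa c1; linarith
  by_cases c2 : 1 + |(k : ℝ)| ≤ 3 * (1 + |(b : ℝ)|)
  · have := key _ pb c2; linarith
  have c3 : 1 + |(k : ℝ)| ≤ 3 * (1 + |((k - a + b : ℤ) : ℝ)|) := by linarith
  have := key _ pc c3; linarith

lemma tsum_cs {ι : Type*} (f g : ι → ℝ≥0∞) :
    (∑' i, f i * g i) ^ 2 ≤ (∑' i, f i ^ 2) * ∑' i, g i ^ 2 := by
  have h : ∑' i, f i * g i ≤ (∑' i, f i ^ 2) ^ (1 / 2 : ℝ) * (∑' i, g i ^ 2) ^ (1 / 2 : ℝ) := by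
    rw [ENNReal.tsum_eq_iSup_sum]
    apply iSup_le
    intro t
    have := ENNReal.inner_le_Lp_mul_Lq t f g (p := 2) (q := 2) Real.HolderConjugate.two_two
    simp only [ENNReal.rpow_two] at this
    refine this.trans ?_
    gcongr <;> exact ENNReal.sum_le_tsum _
  calc _ ≤ ((∑' i, f i ^ 2) ^ (1 / 2 : ℝ) * (∑' i, g i ^ 2) ^ (1 / 2 : ℝ)) ^ 2 := by gcongr
    _ = _ := by
      rw [mul_pow, ← ENNReal.rpow_two, ← ENNReal.rpow_two, ← ENNReal.rpow_mul, ← ENNReal.rpow_mul]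
      norm_num

lemma tsum_shift (f : ℤ → ℝ≥0∞) (c : ℤ) : ∑' j, f (c + j) = ∑' j, f j :=
  (Equiv.addLeft c).tsum_eq f

lemma tsum_reflect (f : ℤ → ℝ≥0∞) (c : ℤ) : ∑' j, f (c - j) = ∑' j, f j :=
  (Equiv.subLeft c).tsum_eq f

lemma weight_sum (s : ℝ) (hs : 1 / 2 < s) (k : ℤ) :
    wgt s k ^ 2 * ∑' j : ℤ × ℤ,
      ((wgt s j.1)⁻¹ * (wgt s j.2)⁻¹ * (wgt s (k - j.1 + j.2))⁻¹) ^ 2 ≤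
    ENNReal.ofReal (3 ^ (2 * s)) * (3 * (∑' k : ℤ, ((wgt s k)⁻¹) ^ 2) ^ 2) := by
  set v : ℤ → ℝ≥0∞ := fun k => ((wgt s k)⁻¹) ^ 2 with hv
  set K := ∑' k, v k with hK
  have e1 : ∑' j : ℤ × ℤ, v j.2 * v (k - j.1 + j.2) = K ^ 2 := by
    rw [ENNReal.tsum_prod', ENNReal.tsum_comm]
    simp_rw [ENNReal.tsum_mul_left]
    have : ∀ b : ℤ, ∑' a, v (k - a + b) = K := by
      intro b
      rw [hK, ← tsum_reflect v (k + b)]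
      congr 1; funext a; congr 1; ring
    simp_rw [this]
    rw [ENNReal.tsum_mul_right, sq]
  have e2 : ∑' j : ℤ × ℤ, v j.1 * v (k - j.1 + j.2) = K ^ 2 := by
    rw [ENNReal.tsum_prod']
    simp_rw [ENNReal.tsum_mul_left, tsum_shift]
    rw [ENNReal.tsum_mul_right, sq]
  have e3 : ∑' j : ℤ × ℤ, v j.1 * v j.2 = K ^ 2 := by
    rw [ENNReal.tsum_prod']
    simp_rw [ENNReal.tsum_mul_left]
    rw [ENNReal.tsum_mul_right, sq]
  have cancel : ∀ a : ℤ, wgt s a ^ 2 * v a = 1 := by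
    intro a
    rw [hv, ← mul_pow, ENNReal.mul_inv_cancel (wgt_ne_zero s a) (wgt_ne_top s a), one_pow]
  rw [← ENNReal.tsum_mul_left]
  calc _ ≤ ∑' j : ℤ × ℤ, ENNReal.ofReal (3 ^ (2 * s)) *
        (v j.2 * v (k - j.1 + j.2) + v j.1 * v (k - j.1 + j.2) + v j.1 * v j.2) := by
        apply ENNReal.tsum_le_tsum
        rintro ⟨a, b⟩
        simp only
        calc _ ≤ (ENNReal.ofReal (3 ^ (2 * s)) *
              (wgt s a ^ 2 + wgt s b ^ 2 + wgt s (k - a + b) ^ 2)) *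
              (v a * v b * v (k - a + b)) := by
              rw [mul_pow, mul_pow]
              gcongr
              exact wgt_sub s hs k a b
          _ = ENNReal.ofReal (3 ^ (2 * s)) *
              ((wgt s a ^ 2 * v a) * (v b * v (k - a + b)) +
               (wgt s b ^ 2 * v b) * (v a * v (k - a + b)) +
               (wgt s (k - a + b) ^ 2 * v (k - a + b)) * (v a * v b)) := by ring
          _ = _ := by simp only [cancel, one_mul]
          _ ≤ _ := le_rfl
    _ = _ := by
      rw [ENNReal.tsum_mul_left, ENNReal.tsum_add, ENNReal.tsum_add, e1, e2, e3]
      ring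

/-- squared weighted norm -/
noncomputable def sqn (s : ℝ) (a : ℤ → ℝ≥0∞) : ℝ≥0∞ := ∑' k, wgt s k ^ 2 * a k ^ 2

lemma main_ennreal (s : ℝ) (hs : 1 / 2 < s) (a b c : ℤ → ℝ≥0∞) :
    sqn s (fun k => ∑' j : ℤ × ℤ, a j.1 * b j.2 * c (k - j.1 + j.2)) ≤
      ENNReal.ofReal (3 ^ (2 * s)) * (3 * (∑' k : ℤ, ((wgt s k)⁻¹) ^ 2) ^ 2) *
        (sqn s a * sqn s b * sqn s c) := by
  set L := ENNReal.ofReal (3 ^ (2 * s)) * (3 * (∑' k : ℤ, ((wgt s k)⁻¹) ^ 2) ^ 2) with hL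
  set A : ℤ → ℝ≥0∞ := fun k => wgt s k ^ 2 * a k ^ 2 with hA
  set B : ℤ → ℝ≥0∞ := fun k => wgt s k ^ 2 * b k ^ 2 with hB
  set D : ℤ → ℝ≥0∞ := fun k => wgt s k ^ 2 * c k ^ 2 with hD
  have step : ∀ k, wgt s k ^ 2 * (∑' j : ℤ × ℤ, a j.1 * b j.2 * c (k - j.1 + j.2)) ^ 2 ≤
      L * ∑' j : ℤ × ℤ, A j.1 * B j.2 * D (k - j.1 + j.2) := by
    intro k
    have h := tsum_cs
      (fun j : ℤ × ℤ => (wgt s j.1)⁻¹ * (wgt s j.2)⁻¹ * (wgt s (k - j.1 + j.2))⁻¹)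
      (fun j : ℤ × ℤ => (wgt s j.1 * a j.1) * (wgt s j.2 * b j.2) *
        (wgt s (k - j.1 + j.2) * c (k - j.1 + j.2)))
    have e : ∀ j : ℤ × ℤ, (wgt s j.1)⁻¹ * (wgt s j.2)⁻¹ * (wgt s (k - j.1 + j.2))⁻¹ *
        ((wgt s j.1 * a j.1) * (wgt s j.2 * b j.2) *
        (wgt s (k - j.1 + j.2) * c (k - j.1 + j.2))) = a j.1 * b j.2 * c (k - j.1 + j.2) := by
      intro j
      calc _ = ((wgt s j.1)⁻¹ * wgt s j.1) * ((wgt s j.2)⁻¹ * wgt s j.2) *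
            ((wgt s (k - j.1 + j.2))⁻¹ * wgt s (k - j.1 + j.2)) *
            (a j.1 * b j.2 * c (k - j.1 + j.2)) := by ring
        _ = _ := by
          simp only [ENNReal.inv_mul_cancel (wgt_ne_zero s _) (wgt_ne_top s _), one_mul]
    simp only [e] at h
    calc _ ≤ _ := mul_le_mul_right h (wgt s k ^ 2)
      _ ≤ _ := by
        rw [← mul_assoc]
        refine mul_le_mul' (weight_sum s hs k) (le_of_eq ?_)
        congr 1; funext j
        simp only [hA, hB, hD]; ring
  calc _ ≤ ∑' k, L * ∑' j : ℤ × ℤ, A j.1 * B j.2 * D (k - j.1 + j.2) :=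
        ENNReal.tsum_le_tsum step
    _ = L * ∑' j : ℤ × ℤ, ∑' k : ℤ, A j.1 * B j.2 * D (k - j.1 + j.2) := by
        rw [ENNReal.tsum_mul_left, ENNReal.tsum_comm]
    _ = L * ∑' j : ℤ × ℤ, A j.1 * B j.2 * ∑' k, D k := by
        congr 2; funext j
        rw [ENNReal.tsum_mul_left, ← tsum_shift D (- j.1 + j.2)]
        congr 2; funext k; congr 1; ring
    _ = _ := by
        rw [ENNReal.tsum_mul_right, ENNReal.tsum_prod']
        simp_rw [ENNReal.tsum_mul_left]
        rw [ENNReal.tsum_mul_right]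
        rfl

lemma sqn_term (s : ℝ) (a : ℤ → ℂ) (k : ℤ) : wgt s k ^ 2 * ‖a k‖ₑ ^ 2 =
    ENNReal.ofReal ((1 + |(k : ℝ)|) ^ (2 * s) * ‖a k‖ ^ 2) := by
  rw [ENNReal.ofReal_mul (Real.rpow_nonneg (wgt_pos_real k).le _), wgt_sq,
    ENNReal.ofReal_pow (norm_nonneg _), ofReal_norm]

lemma term_nonneg (s : ℝ) (a : ℤ → ℂ) (k : ℤ) :
    0 ≤ (1 + |(k : ℝ)|) ^ (2 * s) * ‖a k‖ ^ 2 := by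
  have := Real.rpow_nonneg (wgt_pos_real k).le (2 * s)
  positivity

lemma wnorm_nonneg (s : ℝ) (a : ℤ → ℂ) : 0 ≤ wnorm s a :=
  Real.rpow_nonneg (tsum_nonneg (term_nonneg s a)) _

lemma wnorm_sq (s : ℝ) (a : ℤ → ℂ) :
    wnorm s a ^ 2 = ∑' k : ℤ, (1 + |(k : ℝ)|) ^ (2 * s) * ‖a k‖ ^ 2 := by
  unfold wnorm
  rw [← Real.rpow_natCast, ← Real.rpow_mul (tsum_nonneg (term_nonneg s a))]
  norm_num

lemma sqn_eq (s : ℝ) (a : ℤ → ℂ) (h : wMem s a) :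
    sqn s (fun k => ‖a k‖ₑ) = ENNReal.ofReal (wnorm s a ^ 2) := by
  unfold sqn
  simp_rw [sqn_term]
  rw [wnorm_sq, ENNReal.ofReal_tsum_of_nonneg (term_nonneg s a) h]

lemma wMem_of_sqn (s : ℝ) (a : ℤ → ℂ) (h : sqn s (fun k => ‖a k‖ₑ) ≠ ⊤) : wMem s a := by
  unfold sqn at h
  simp_rw [sqn_term] at h
  have := ENNReal.summable_toReal h
  simp only [ENNReal.toReal_ofReal (term_nonneg s a _)] at this
  exact this

/-- For `s > 1/2`, the triple convolution of `ℓ^{2,s}` sequences along the set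
`k - j₁ + j₂ - j₃ = 0` converges absolutely and satisfies
`sup_k |Q(k)| + ‖Q‖_{ℓ^{2,s}} ≤ C ‖M‖ ‖N‖ ‖P‖`. -/
theorem l2s_triple_convolution (s : ℝ) (hs : 1 / 2 < s) :
    ∃ C : ℝ, 0 < C ∧ ∀ M N P : ℤ → ℂ, wMem s M → wMem s N → wMem s P →
      (∀ k : ℤ, Summable (fun j : ℤ × ℤ => ‖M j.1 * N j.2 * P (k - j.1 + j.2)‖)) ∧
      wMem s (tripleSum M N P) ∧
      ∀ k : ℤ, ‖tripleSum M N P k‖ + wnorm s (tripleSum M N P) ≤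
        C * wnorm s M * wnorm s N * wnorm s P := by
  have hLtop : ENNReal.ofReal (3 ^ (2 * s)) * (3 * (∑' k : ℤ, ((wgt s k)⁻¹) ^ 2) ^ 2) ≠ ⊤ :=
    ENNReal.mul_ne_top ENNReal.ofReal_ne_top
      (ENNReal.mul_ne_top (by norm_num) (ENNReal.pow_ne_top (tsum_inv_wgt_ne_top s hs)))
  obtain ⟨c, hc⟩ : ∃ c : ℝ, c =
    (ENNReal.ofReal (3 ^ (2 * s)) * (3 * (∑' k : ℤ, ((wgt s k)⁻¹) ^ 2) ^ 2)).toReal := ⟨_, rfl⟩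
  have hc0 : 0 ≤ c := hc ▸ ENNReal.toReal_nonneg
  refine ⟨2 * (c + 1), by positivity, ?_⟩
  intro M N P hM hN hP
  have nM := wnorm_nonneg s M
  have nN := wnorm_nonneg s N
  have nP := wnorm_nonneg s P
  set R : ℝ := (c + 1) * wnorm s M * wnorm s N * wnorm s P with hR
  have hR0 : 0 ≤ R := by positivity
  set S : ℤ → ℝ≥0∞ := fun k => ∑' j : ℤ × ℤ, ‖M j.1‖ₑ * ‖N j.2‖ₑ * ‖P (k - j.1 + j.2)‖ₑ with hS
  have hSR : sqn s S ≤ ENNReal.ofReal (R ^ 2) := by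
    refine (main_ennreal s hs (fun k => ‖M k‖ₑ) (fun k => ‖N k‖ₑ) (fun k => ‖P k‖ₑ)).trans ?_
    rw [sqn_eq s M hM, sqn_eq s N hN, sqn_eq s P hP, ← ENNReal.ofReal_toReal hLtop, ← hc,
      ← ENNReal.ofReal_mul (by positivity), ← ENNReal.ofReal_mul (by positivity),
      ← ENNReal.ofReal_mul (by positivity)]
    apply ENNReal.ofReal_le_ofReal
    have : R ^ 2 = (c + 1) ^ 2 * (wnorm s M ^ 2 * wnorm s N ^ 2 * wnorm s P ^ 2) := by
      rw [hR]; ring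
    rw [this]
    gcongr
    nlinarith
  have hSk : ∀ k, S k ≤ ENNReal.ofReal R := by
    intro k
    have h1 : S k ^ 2 ≤ ENNReal.ofReal R ^ 2 := by
      rw [← ENNReal.ofReal_pow hR0]
      refine le_trans ?_ ((ENNReal.le_tsum (f := fun k => wgt s k ^ 2 * S k ^ 2) k).trans hSR)
      exact le_mul_of_one_le_left zero_le (one_le_wgt_sq s hs k)
    exact (ENNReal.pow_le_pow_left_iff two_ne_zero).1 h1
  have hsum : ∀ k : ℤ, Summable (fun j : ℤ × ℤ => ‖M j.1 * N j.2 * P (k - j.1 + j.2)‖) := by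
    intro k
    have h : ∑' j : ℤ × ℤ, ‖M j.1‖ₑ * ‖N j.2‖ₑ * ‖P (k - j.1 + j.2)‖ₑ ≠ ⊤ :=
      ((hSk k).trans_lt ENNReal.ofReal_lt_top).ne
    simpa [ENNReal.toReal_mul] using ENNReal.summable_toReal h
  have hQS : ∀ k, ‖tripleSum M N P k‖ₑ ≤ S k := by
    intro k
    have h1 := norm_tsum_le_tsum_norm (hsum k)
    have h2 : ENNReal.ofReal (∑' j : ℤ × ℤ, ‖M j.1 * N j.2 * P (k - j.1 + j.2)‖) = S k := by
      rw [ENNReal.ofReal_tsum_of_nonneg (fun _ => norm_nonneg _) (hsum k)]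
      simp only [hS, ofReal_norm, enorm_mul]
    rw [← h2, ← ofReal_norm]
    exact ENNReal.ofReal_le_ofReal h1
  have hQ : sqn s (fun k => ‖tripleSum M N P k‖ₑ) ≤ ENNReal.ofReal (R ^ 2) := by
    refine le_trans (ENNReal.tsum_le_tsum fun k => ?_) hSR
    have := hQS k
    gcongr
  have hmem := wMem_of_sqn s (tripleSum M N P) (hQ.trans_lt ENNReal.ofReal_lt_top).ne
  refine ⟨hsum, hmem, fun k => ?_⟩
  have b1 : ‖tripleSum M N P k‖ ≤ R := by
    have := (hQS k).trans (hSk k)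
    rw [← ofReal_norm] at this
    exact (ENNReal.ofReal_le_ofReal_iff hR0).1 this
  have b2 : wnorm s (tripleSum M N P) ≤ R := by
    rw [sqn_eq s _ hmem, ENNReal.ofReal_le_ofReal_iff (by positivity)] at hQ
    exact (pow_le_pow_iff_left₀ (wnorm_nonneg s _) hR0 two_ne_zero).1 hQ
  have : 2 * (c + 1) * wnorm s M * wnorm s N * wnorm s P = R + R := by rw [hR]; ring
  linarith
end

section
/- Let s > 1/2, 0 < t₁ < t₂, M ∈ ℝ, ε ∈ {+1,−1}, and let A : (t₁,t₂) → ℓ^{2,s}(ℤ) be continuously differentiable as a map into the Banach space ℓ^{2,s}(ℤ), such that each component satisfies i A_k'(t) = ε (1/(8πt)) ∑_{(j₁,j₂,j₃)∈ℤ³, k−j₁+j₂−j₃=0} e^{−i(k²−j₁²+j₂²−j₃²)/(4t)} A_{j₁}(t) \overline{A_{j₂}(t)} A_{j₃}(t) − (M/(4πt)) A_k(t). Then for every bounded function a : ℤ → ℝ, the function t ↦ ∑_{k∈ℤ} a(k)|A_k(t)|² is differentiable on (t₁,t₂) and d/dt ∑_k a(k)|A_k(t)|² = (ε/(16π i t))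 ∑_{k−j₁+j₂−j₃=0} (a(k) − a(j₁) + a(j₂) − a(j₃)) e^{−i(k²−j₁²+j₂²−j₃²)/(4t)} A_{j₁}(t) \overline{A_{j₂}(t)} A_{j₃}(t) \overline{A_k(t)}. -/
open scoped BigOperators
open Set

/-- The cubic interaction sum `∑_{k-j₁+j₂-j₃=0} e^{-i(k²-j₁²+j₂²-j₃²)/(4t)} A_{j₁} conj(A_{j₂}) A_{j₃}`,
parametrized by the two free indices `(j₁, j₂)`, with `j₃ = k - j₁ + j₂`. -/
noncomputable def cubicSum (A : ℤ → ℂ) (t : ℝ) (k : ℤ) : ℂ :=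
  ∑' j : ℤ × ℤ,
    Complex.exp (-Complex.I *
        ((k ^ 2 - j.1 ^ 2 + j.2 ^ 2 - (k - j.1 + j.2) ^ 2 : ℤ) : ℂ) / (4 * (t : ℂ)))
      * A j.1 * (starRingEnd ℂ) (A j.2) * A (k - j.1 + j.2)

/-- `A : (t₁,t₂) → ℓ^{2,s}` is continuously differentiable as a map into the Banach
space `ℓ^{2,s}(ℤ)`: the weighted sequence `k ↦ (1+|k|)^s A_k(t)` defines a `C¹` curve in `ℓ²`. -/
def C1IntoL2s (s t₁ t₂ : ℝ) (A : ℝ → ℤ → ℂ) : Prop :=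
  ∃ B : ℝ → lp (fun _ : ℤ => ℂ) 2,
    (∀ t ∈ Ioo t₁ t₂, ∀ k : ℤ, B t k = ((1 + |(k : ℝ)|) ^ s : ℝ) * A t k) ∧
    ContDiffOn ℝ 1 B (Ioo t₁ t₂)


lemma wcl_bilin (c : ℤ → ℝ) (C : ℝ) (hc : ∀ k, |c k| ≤ C) :
    IsBoundedBilinearMap ℝ (fun p : lp (fun _ : ℤ => ℂ) 2 × lp (fun _ : ℤ => ℂ) 2 =>
      ∑' k : ℤ, c k * (p.1 k * (starRingEnd ℂ) (p.2 k)).re) := by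
  have hpq : (2 : ENNReal).toReal.HolderConjugate (2 : ENNReal).toReal := by
    rw [Real.holderConjugate_iff]; norm_num
  have hC0 : 0 ≤ C := (abs_nonneg _).trans (hc 0)
  have hbd : ∀ (f g : lp (fun _ : ℤ => ℂ) 2) (k : ℤ),
      ‖c k * (f k * (starRingEnd ℂ) (g k)).re‖ ≤ C * (‖f k‖ * ‖g k‖) := by
    intro f g k
    rw [norm_mul]
    refine mul_le_mul (hc k) ?_ (norm_nonneg _) hC0
    refine (Complex.abs_re_le_norm _).trans ?_
    rw [norm_mul, RCLike.norm_conj]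
  have hsum : ∀ (f g : lp (fun _ : ℤ => ℂ) 2),
      Summable (fun k : ℤ => c k * (f k * (starRingEnd ℂ) (g k)).re) := fun f g =>
    Summable.of_norm_bounded ((lp.summable_mul hpq f g).mul_left C) (hbd f g)
  constructor
  · intro x y z
    rw [← (hsum x z).tsum_add (hsum y z)]
    refine tsum_congr fun k => ?_
    simp [add_mul]; ring
  · intro r x y
    rw [smul_eq_mul, ← tsum_mul_left]
    refine tsum_congr fun k => ?_
    simp; ring
  · intro x y z
    rw [← (hsum x y).tsum_add (hsum x z)]
    refine tsum_congr fun k => ?_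
    simp [mul_add]
  · intro r x y
    rw [smul_eq_mul, ← tsum_mul_left]
    refine tsum_congr fun k => ?_
    simp; ring
  · refine ⟨C + 1, by linarith, fun x y => ?_⟩
    refine (tsum_of_norm_bounded ((lp.summable_mul hpq x y).mul_left C).hasSum (hbd x y)).trans ?_
    rw [tsum_mul_left, mul_assoc]
    have h := lp.tsum_mul_le_mul_norm' hpq x y
    have h0 : 0 ≤ ‖x‖ * ‖y‖ := by positivity
    nlinarith

lemma wcl_l1 (s : ℝ) (hs : 1 / 2 < s) (A : ℤ → ℂ) (h : wMem s A) :
    Summable (fun k => ‖A k‖) := by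
  have h1 : Summable (fun k : ℤ => (1 + |(k : ℝ)|) ^ (-(2 * s))) := by
    have h2 := Real.summable_abs_int_rpow (b := 2 * s) (by linarith)
    have h3 : Summable (fun k : ℤ => |(k : ℝ)| ^ (-(2 * s)) + if k = 0 then (1 : ℝ) else 0) :=
      h2.add (summable_of_ne_finset_zero (s := {0}) (by intro b hb; simp at hb; simp [hb]))
    refine Summable.of_nonneg_of_le (fun k => by positivity) (fun k => ?_) h3
    by_cases hk : k = 0
    · subst hk
      simp
      positivity
    · simp only [hk, if_false, add_zero]
      have : 0 < |(k : ℝ)| := by positivity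
      exact Real.rpow_le_rpow_of_nonpos this (by linarith) (by linarith)
  unfold wMem at h
  refine Summable.of_nonneg_of_le (fun k => norm_nonneg _) (fun k => ?_) (h1.add h)
  have hw : 0 < (1 + |(k : ℝ)|) := by positivity
  rw [Real.rpow_neg hw.le]
  have hp : 0 < (1 + |(k : ℝ)|) ^ (2 * s) := by positivity
  set p := (1 + |(k : ℝ)|) ^ (2 * s)
  have e : p⁻¹ + p * ‖A k‖ ^ 2 - ‖A k‖ = p⁻¹ * ((1 - p * ‖A k‖ / 2) ^ 2 + 3 / 4 * (p * ‖A k‖) ^ 2) := by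
    field_simp; ring
  have : 0 ≤ p⁻¹ * ((1 - p * ‖A k‖ / 2) ^ 2 + 3 / 4 * (p * ‖A k‖) ^ 2) := by positivity
  linarith

/-- The quartic term. -/
noncomputable def wclG (A : ℤ → ℂ) (t : ℝ) (q : ℤ × ℤ × ℤ) : ℂ :=
  Complex.exp (-Complex.I *
      ((q.1 ^ 2 - q.2.1 ^ 2 + q.2.2 ^ 2 - (q.1 - q.2.1 + q.2.2) ^ 2 : ℤ) : ℂ) / (4 * (t : ℂ))) *
    A q.2.1 * (starRingEnd ℂ) (A q.2.2) * A (q.1 - q.2.1 + q.2.2) * (starRingEnd ℂ) (A q.1)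

lemma wcl_norm_exp (n : ℤ) (t : ℝ) :
    ‖Complex.exp (-Complex.I * (n : ℂ) / (4 * (t : ℂ)))‖ = 1 := by
  have : -Complex.I * (n : ℂ) / (4 * (t : ℂ)) = ((-(n : ℝ) / (4 * t) : ℝ) : ℂ) * Complex.I := by
    push_cast; ring
  rw [this, Complex.norm_exp_ofReal_mul_I]

lemma wcl_summable (A : ℤ → ℂ) (t : ℝ) (h : Summable (fun k => ‖A k‖)) :
    Summable (fun q => ‖wclG A t q‖) := by
  have h3 : Summable (fun q : ℤ × ℤ × ℤ => ‖A q.1‖ * (‖A q.2.1‖ * ‖A q.2.2‖)) :=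
    h.mul_of_nonneg (h.mul_of_nonneg h (fun _ => norm_nonneg _) (fun _ => norm_nonneg _))
      (fun _ => norm_nonneg _) (fun _ => by simp only [Pi.zero_apply]; positivity)
  refine Summable.of_nonneg_of_le (fun k => norm_nonneg _) (fun q => ?_)
    (h3.mul_left (∑' k, ‖A k‖))
  unfold wclG
  simp only [norm_mul, wcl_norm_exp, RCLike.norm_conj]
  have hb : ‖A (q.1 - q.2.1 + q.2.2)‖ ≤ ∑' k, ‖A k‖ :=
    h.le_tsum _ (fun _ _ => norm_nonneg _)
  have h0 : 0 ≤ ‖A q.1‖ * (‖A q.2.1‖ * ‖A q.2.2‖) := by positivity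
  nlinarith [mul_le_mul_of_nonneg_right hb h0]

/-- swap `k` and `j₂`. -/
def wclRho : ℤ × ℤ × ℤ ≃ ℤ × ℤ × ℤ where
  toFun q := (q.2.2, q.2.1, q.1)
  invFun q := (q.2.2, q.2.1, q.1)
  left_inv _ := rfl
  right_inv _ := rfl

/-- swap `k` with `j₁` and `j₂` with `j₃`. -/
def wclSigma : ℤ × ℤ × ℤ ≃ ℤ × ℤ × ℤ where
  toFun q := (q.2.1, q.1, q.1 - q.2.1 + q.2.2)
  invFun q := (q.2.1, q.1, q.1 - q.2.1 + q.2.2)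
  left_inv q := by ext <;> simp <;> ring
  right_inv q := by ext <;> simp <;> ring

lemma wclG_rho (A : ℤ → ℂ) (t : ℝ) (q) : wclG A t (wclRho q) = wclG A t q := by
  obtain ⟨k, i, j⟩ := q
  simp only [wclG, wclRho, Equiv.coe_fn_mk]
  rw [show j - i + k = k - i + j by ring,
    show j ^ 2 - i ^ 2 + k ^ 2 - (k - i + j) ^ 2 = k ^ 2 - i ^ 2 + j ^ 2 - (k - i + j) ^ 2 by ring]
  ring

lemma wclG_sigma (A : ℤ → ℂ) (t : ℝ) (q) :
    wclG A t (wclSigma q) = (starRingEnd ℂ) (wclG A t q) := by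
  obtain ⟨k, i, j⟩ := q
  simp only [wclG, wclSigma, Equiv.coe_fn_mk, map_mul, Complex.conj_conj, ← Complex.exp_conj]
  rw [show i - k + (k - i + j) = j by ring,
    show i ^ 2 - k ^ 2 + (k - i + j) ^ 2 - j ^ 2 = -(k ^ 2 - i ^ 2 + j ^ 2 - (k - i + j) ^ 2) by ring]
  have : (starRingEnd ℂ) (-Complex.I *
      ((k ^ 2 - i ^ 2 + j ^ 2 - (k - i + j) ^ 2 : ℤ) : ℂ) / (4 * (t : ℂ))) =
      -Complex.I * ((-(k ^ 2 - i ^ 2 + j ^ 2 - (k - i + j) ^ 2) : ℤ) : ℂ) / (4 * (t : ℂ)) := by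
    simp only [map_div₀, map_mul, map_neg, Complex.conj_I, Complex.conj_ofReal, map_intCast,
      map_ofNat]
    push_cast
    ring
  rw [this]
  ring

lemma wcl_sym (A : ℤ → ℂ) (t : ℝ) (h : Summable (fun k => ‖A k‖)) (a : ℤ → ℝ) (C : ℝ)
    (ha : ∀ k, |a k| ≤ C) :
    Summable (fun q : ℤ × ℤ × ℤ => (a q.1 : ℂ) * wclG A t q) ∧
    ∑' q : ℤ × ℤ × ℤ, ((a q.1 - a q.2.1 + a q.2.2 - a (q.1 - q.2.1 + q.2.2) : ℝ) : ℂ) * wclG A t q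
      = 4 * Complex.I * ((∑' q : ℤ × ℤ × ℤ, (a q.1 : ℂ) * wclG A t q).im : ℂ) := by
  have hG := wcl_summable A t h
  have hs : ∀ f : ℤ × ℤ × ℤ → ℤ, Summable (fun q => (a (f q) : ℂ) * wclG A t q) := by
    intro f
    refine Summable.of_norm_bounded (hG.mul_left C) (fun q => ?_)
    rw [norm_mul, Complex.norm_real]
    exact mul_le_mul_of_nonneg_right (ha _) (norm_nonneg _)
  refine ⟨hs _, ?_⟩
  have h2 : ∑' q : ℤ × ℤ × ℤ, (a q.2.2 : ℂ) * wclG A t q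
      = ∑' q : ℤ × ℤ × ℤ, (a q.1 : ℂ) * wclG A t q := by
    rw [← wclRho.tsum_eq]
    refine tsum_congr fun q => ?_
    rw [wclG_rho]; rfl
  have h1 : ∑' q : ℤ × ℤ × ℤ, (a q.2.1 : ℂ) * wclG A t q
      = (starRingEnd ℂ) (∑' q : ℤ × ℤ × ℤ, (a q.1 : ℂ) * wclG A t q) := by
    rw [← wclSigma.tsum_eq, Complex.conj_tsum]
    refine tsum_congr fun q => ?_
    rw [wclG_sigma, map_mul, Complex.conj_ofReal]; rfl
  have h3 : ∑' q : ℤ × ℤ × ℤ, (a (q.1 - q.2.1 + q.2.2) : ℂ) * wclG A t q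
      = (starRingEnd ℂ) (∑' q : ℤ × ℤ × ℤ, (a q.1 : ℂ) * wclG A t q) := by
    rw [← h2, ← wclSigma.tsum_eq, Complex.conj_tsum]
    refine tsum_congr fun q => ?_
    rw [wclG_sigma, map_mul, Complex.conj_ofReal]
    have e : (wclSigma q).1 - (wclSigma q).2.1 + (wclSigma q).2.2 = q.2.2 := by
      simp only [wclSigma, Equiv.coe_fn_mk]; ring
    rw [e]
  have e : ∀ q : ℤ × ℤ × ℤ,
      ((a q.1 - a q.2.1 + a q.2.2 - a (q.1 - q.2.1 + q.2.2) : ℝ) : ℂ) * wclG A t q =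
      (a q.1 : ℂ) * wclG A t q - (a q.2.1 : ℂ) * wclG A t q + (a q.2.2 : ℂ) * wclG A t q
        - (a (q.1 - q.2.1 + q.2.2) : ℂ) * wclG A t q := by
    intro q; push_cast; ring
  rw [tsum_congr e, (((hs _).sub (hs _)).add (hs _)).tsum_sub (hs _),
    ((hs _).sub (hs _)).tsum_add (hs _), (hs _).tsum_sub (hs _), h1, h2, h3]
  apply Complex.ext <;> simp <;> ring

lemma wcl_fubini (A : ℤ → ℂ) (t : ℝ) (a : ℤ → ℝ)
    (hs : Summable (fun q : ℤ × ℤ × ℤ => (a q.1 : ℂ) * wclG A t q)) :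
    HasSum (fun k : ℤ => (a k : ℂ) * (cubicSum A t k * (starRingEnd ℂ) (A k)))
      (∑' q : ℤ × ℤ × ℤ, (a q.1 : ℂ) * wclG A t q) := by
  have h := hs.hasSum.prod_fiberwise (fun k => (hs.prod_factor k).hasSum)
  convert h using 2 with k
  rw [cubicSum, ← tsum_mul_right, ← tsum_mul_left]
  rfl

/-- Conservation law with weights: for a `C¹`-in-`ℓ^{2,s}` solution of the coefficient system,
for any bounded real sequence `a`, the quantity `∑_k a(k)|A_k(t)|²` is differentiable with the
stated symmetrized derivative. -/
theorem weighted_conservation_law (s t₁ t₂ M ε : ℝ) (hs : 1 / 2 < s)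
    (ht₁ : 0 < t₁) (ht : t₁ < t₂) (hε : ε = 1 ∨ ε = -1)
    (A : ℝ → ℤ → ℂ)
    (hmem : ∀ t ∈ Ioo t₁ t₂, wMem s (A t))
    (hC1 : C1IntoL2s s t₁ t₂ A)
    (hode : ∀ t ∈ Ioo t₁ t₂, ∀ k : ℤ,
      Complex.I * deriv (fun τ : ℝ => A τ k) t =
        (ε : ℂ) * (1 / (8 * (Real.pi : ℂ) * t)) * cubicSum (A t) t k
          - ((M : ℂ) / (4 * (Real.pi : ℂ) * t)) * A t k) :
    ∀ a : ℤ → ℝ, (∃ Ca : ℝ, ∀ k : ℤ, |a k| ≤ Ca) →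
      ∀ t ∈ Ioo t₁ t₂, ∃ D : ℝ,
        HasDerivAt (fun τ : ℝ => ∑' k : ℤ, a k * ‖A τ k‖ ^ 2) D t ∧
        (D : ℂ) = (ε : ℂ) / (16 * (Real.pi : ℂ) * Complex.I * t) *
          ∑' q : ℤ × ℤ × ℤ,
            ((a q.1 - a q.2.1 + a q.2.2 - a (q.1 - q.2.1 + q.2.2) : ℝ) : ℂ) *
            Complex.exp (-Complex.I *
              ((q.1 ^ 2 - q.2.1 ^ 2 + q.2.2 ^ 2 - (q.1 - q.2.1 + q.2.2) ^ 2 : ℤ) : ℂ)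
                / (4 * (t : ℂ))) *
            A t q.2.1 * (starRingEnd ℂ) (A t q.2.2) * A t (q.1 - q.2.1 + q.2.2) *
            (starRingEnd ℂ) (A t q.1) := by
  intro a ⟨C, ha⟩ t htm
  obtain ⟨B, hB, hBd⟩ := hC1
  have hnhds : Ioo t₁ t₂ ∈ nhds t := Ioo_mem_nhds htm.1 htm.2
  have hBt : HasDerivAt B (deriv B t) t :=
    ((hBd.contDiffAt hnhds).differentiableAt (by norm_num)).hasDerivAt
  set w : ℤ → ℝ := fun k => (1 + |(k : ℝ)|) ^ s with hw
  have hw1 : ∀ k, 1 ≤ w k := fun k =>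
    Real.one_le_rpow (by linarith [abs_nonneg (k : ℝ)]) (by linarith)
  have hw0 : ∀ k, w k ≠ 0 := fun k => by linarith [hw1 k] |> fun h : 0 < w k => h.ne'
  have hAB : ∀ τ ∈ Ioo t₁ t₂, ∀ k, A τ k = ((w k)⁻¹ : ℝ) * B τ k := by
    intro τ hτ k
    have := hw0 k
    rw [hB τ hτ k, ← mul_assoc, ← Complex.ofReal_mul, inv_mul_cancel₀ this]
    simp
  have hAd : ∀ k, deriv (fun τ => A τ k) t = ((w k)⁻¹ : ℝ) * (deriv B t) k := by
    intro k
    have h1 : HasDerivAt (fun τ => B τ k) ((deriv B t) k) t :=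
      (lp.evalCLM ℝ (fun _ : ℤ => ℂ) 2 k).hasFDerivAt.comp_hasDerivAt t hBt
    refine HasDerivAt.deriv ((h1.const_mul (((w k)⁻¹ : ℝ) : ℂ)).congr_of_eventuallyEq ?_)
    filter_upwards [hnhds] with τ hτ using hAB τ hτ k
  set c : ℤ → ℝ := fun k => a k * ((w k)⁻¹ * (w k)⁻¹) with hcdef
  have hc : ∀ k, |c k| ≤ C := by
    intro k
    have h1 : (w k)⁻¹ ≤ 1 := inv_le_one_of_one_le₀ (hw1 k)
    have h0 : 0 ≤ (w k)⁻¹ := by have := hw1 k; positivity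
    rw [hcdef]
    simp only [abs_mul, abs_of_nonneg h0]
    have := ha k
    have h2 : (w k)⁻¹ * (w k)⁻¹ ≤ 1 := by nlinarith
    nlinarith [abs_nonneg (a k)]
  have hbil := wcl_bilin c C hc
  have hder := (hbil.hasFDerivAt (B t, B t)).comp_hasDerivAt t (hBt.prodMk hBt)
  have hl1 := wcl_l1 s hs (A t) (hmem t htm)
  obtain ⟨hsum, hsym⟩ := wcl_sym (A t) t hl1 a C ha
  have hfub := wcl_fubini (A t) t a hsum
  set T := ∑' q : ℤ × ℤ × ℤ, (a q.1 : ℂ) * wclG (A t) t q with hT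
  have ht0 : (t : ℝ) ≠ 0 := (ht₁.trans htm.1).ne'
  have hpt : ∀ k, (deriv (fun τ => A τ k) t * (starRingEnd ℂ) (A t k)).re =
      ε / (8 * Real.pi * t) * (cubicSum (A t) t k * (starRingEnd ℂ) (A t k)).im := by
    intro k
    have h := hode t htm k
    have h2 : deriv (fun τ => A τ k) t = -Complex.I *
        (((ε / (8 * Real.pi * t) : ℝ) : ℂ) * cubicSum (A t) t k
          - ((M / (4 * Real.pi * t) : ℝ) : ℂ) * A t k) := by
      have h3 : deriv (fun τ => A τ k) t =
        -Complex.I * (Complex.I * deriv (fun τ => A τ k) t) := by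
        rw [← mul_assoc, neg_mul, Complex.I_mul_I]; simp
      rw [h3, h]
      push_cast
      ring
    rw [h2]
    generalize ε / (8 * Real.pi * t) = r
    generalize M / (4 * Real.pi * t) = m
    simp
    ring
  have hval : hbil.deriv (B t, B t) (deriv B t, deriv B t) = 2 * (ε / (8 * Real.pi * t)) * T.im := by
    rw [IsBoundedBilinearMap.deriv_apply]
    have e1 : ∀ k, c k * (B t k * (starRingEnd ℂ) ((deriv B t) k)).re =
        (ε / (8 * Real.pi * t)) * ((a k : ℂ) * (cubicSum (A t) t k * (starRingEnd ℂ) (A t k))).im := by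
      intro k
      rw [Complex.im_ofReal_mul, mul_left_comm, ← hpt, hAd, hAB t htm]
      simp [hcdef]
      ring
    have e2 : ∀ k, c k * ((deriv B t) k * (starRingEnd ℂ) (B t k)).re =
        (ε / (8 * Real.pi * t)) * ((a k : ℂ) * (cubicSum (A t) t k * (starRingEnd ℂ) (A t k))).im := by
      intro k
      rw [← e1]
      simp only [Complex.mul_re, Complex.conj_re, Complex.conj_im]
      ring
    have him := Complex.hasSum_im hfub
    simp only [e1, e2]
    rw [tsum_mul_left, him.tsum_eq]
    ring
  refine ⟨2 * (ε / (8 * Real.pi * t)) * T.im, ?_, ?_⟩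
  · rw [← hval]
    refine hder.congr_of_eventuallyEq ?_
    filter_upwards [hnhds] with τ hτ
    refine tsum_congr fun k => ?_
    rw [hAB τ hτ k, Complex.sq_norm, Complex.normSq_apply]
    simp [hcdef]
    ring
  · have e : ∀ q : ℤ × ℤ × ℤ, ((a q.1 - a q.2.1 + a q.2.2 - a (q.1 - q.2.1 + q.2.2) : ℝ) : ℂ) *
            Complex.exp (-Complex.I *
              ((q.1 ^ 2 - q.2.1 ^ 2 + q.2.2 ^ 2 - (q.1 - q.2.1 + q.2.2) ^ 2 : ℤ) : ℂ)
                / (4 * (t : ℂ))) *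
            A t q.2.1 * (starRingEnd ℂ) (A t q.2.2) * A t (q.1 - q.2.1 + q.2.2) *
            (starRingEnd ℂ) (A t q.1) =
        ((a q.1 - a q.2.1 + a q.2.2 - a (q.1 - q.2.1 + q.2.2) : ℝ) : ℂ) * wclG (A t) t q := by
      intro q
      simp only [wclG, mul_assoc]
    rw [tsum_congr e, hsym]
    have hpi : (Real.pi : ℂ) ≠ 0 := by exact_mod_cast Real.pi_ne_zero
    have ht0' : (t : ℂ) ≠ 0 := by exact_mod_cast ht0
    push_cast
    field_simp [Complex.I_ne_zero]
    ring
end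

section
/- Let s > 1/2, 0 < t₁ < t₂, M ∈ ℝ, ε ∈ {+1,−1}, and let A : (t₁,t₂) → ℓ^{2,s}(ℤ) be continuously differentiable as a map into the Banach space ℓ^{2,s}(ℤ), such that each component satisfies i A_k'(t) = ε (1/(8πt)) ∑_{(j₁,j₂,j₃)∈ℤ³, k−j₁+j₂−j₃=0} e^{−i(k²−j₁²+j₂²−j₃²)/(4t)} A_{j₁}(t) \overline{A_{j₂}(t)} A_{j₃}(t) − (M/(4πt)) A_k(t). Then the momentum ∑_{k∈ℤ} k |A_k(t)|² converges absolutely for each t and is constant on (t₁,t₂). -/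
open scoped BigOperators
open Set

section aux

lemma summable_wt {r : ℝ} (hr : 1 < r) : Summable (fun k : ℤ => (1 + |(k : ℝ)|) ^ (-r)) := by
  have h : Summable (fun n : ℕ => (1 + |((n : ℤ) : ℝ)|) ^ (-r)) := by
    have h1 := (summable_nat_add_iff 1).2 (Real.summable_nat_rpow.2 (show -r < -1 by linarith))
    refine h1.congr fun n => ?_
    push_cast
    rw [abs_of_nonneg (by positivity), add_comm]
  refine Summable.of_nat_of_neg h ?_
  refine h.congr fun n => ?_
  push_cast
  rw [abs_neg]

lemma one_le_wt (k : ℤ) : 1 ≤ 1 + |(k : ℝ)| := by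
  have := abs_nonneg (k : ℝ); linarith

lemma wt_le {r : ℝ} (hr : 1 < r) (k : ℤ) : (1 + |(k : ℝ)|) ≤ (1 + |(k : ℝ)|) ^ r := by
  have := Real.rpow_le_rpow_of_exponent_le (one_le_wt k) hr.le
  simpa using this

lemma wMem.summable_sq {s : ℝ} (hs : 1 / 2 < s) {a : ℤ → ℂ} (h : wMem s a) :
    Summable (fun k : ℤ => (1 + |(k : ℝ)|) * ‖a k‖ ^ 2) := by
  refine Summable.of_nonneg_of_le (fun k => by positivity) (fun k => ?_) h
  have := wt_le (show 1 < 2 * s by linarith) k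
  gcongr

lemma wMem.summable_norm {s : ℝ} (hs : 1 / 2 < s) {a : ℤ → ℂ} (h : wMem s a) :
    Summable (fun k : ℤ => ‖a k‖) := by
  have h1 : Summable (fun k : ℤ => (1 + |(k : ℝ)|) ^ (-(2 * s)) +
      (1 + |(k : ℝ)|) ^ (2 * s) * ‖a k‖ ^ 2) := (summable_wt (by linarith)).add h
  refine Summable.of_nonneg_of_le (fun k => by positivity) (fun k => ?_) h1
  have hpos : 0 < (1 + |(k : ℝ)|) := by positivity
  have e1 : (1 + |(k : ℝ)|) ^ (-(2 * s)) = ((1 + |(k : ℝ)|) ^ (-s)) ^ 2 := by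
    rw [← Real.rpow_natCast, ← Real.rpow_mul hpos.le]; congr 1; push_cast; ring
  have e2 : (1 + |(k : ℝ)|) ^ (2 * s) = ((1 + |(k : ℝ)|) ^ s) ^ 2 := by
    rw [← Real.rpow_natCast, ← Real.rpow_mul hpos.le]; congr 1; push_cast; ring
  have e3 : (1 + |(k : ℝ)|) ^ (-s) * (1 + |(k : ℝ)|) ^ s = 1 := by
    rw [← Real.rpow_add hpos]; simp
  rw [e1, e2]
  have hn := norm_nonneg (a k)
  generalize (1 + |(k : ℝ)|) ^ (-s) = x at *
  generalize (1 + |(k : ℝ)|) ^ s = y at *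
  have : ‖a k‖ = x * (y * ‖a k‖) := by rw [← mul_assoc, e3, one_mul]
  nlinarith [sq_nonneg (x - y * ‖a k‖), sq_nonneg x, sq_nonneg (y * ‖a k‖)]

lemma summable_triple {f g h : ℤ → ℝ} (hf : Summable f) (hg : Summable g) (hh : Summable h)
    (hf0 : ∀ k, 0 ≤ f k) (hg0 : ∀ k, 0 ≤ g k) (hh0 : ∀ k, 0 ≤ h k)
    (φ : ℤ × ℤ × ℤ → ℤ × ℤ × ℤ) (hφ : Function.Injective φ) :
    Summable (fun p => f (φ p).1 * (g (φ p).2.1 * h (φ p).2.2)) := by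
  have h1 := hf.mul_of_nonneg (hg.mul_of_nonneg hh hg0 hh0) hf0
    (fun x => mul_nonneg (hg0 _) (hh0 _))
  exact h1.comp_injective hφ

lemma sqrt_wt_le (k a b c : ℤ) (h : k = a - b + c) :
    √(1 + |(k : ℝ)|) ≤ √(1 + |(a : ℝ)|) + √(1 + |(b : ℝ)|) + √(1 + |(c : ℝ)|) := by
  apply Real.sqrt_le_iff.2
  refine ⟨by positivity, ?_⟩
  have hk : |(k : ℝ)| ≤ |(a : ℝ)| + |(b : ℝ)| + |(c : ℝ)| := by
    rw [h]; push_cast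
    exact (abs_add_le _ _).trans (by gcongr; exact abs_sub _ _)
  have s1 := Real.sq_sqrt (show 0 ≤ 1 + |(a : ℝ)| by positivity)
  have s2 := Real.sq_sqrt (show 0 ≤ 1 + |(b : ℝ)| by positivity)
  have s3 := Real.sq_sqrt (show 0 ≤ 1 + |(c : ℝ)| by positivity)
  have n1 := Real.sqrt_nonneg (1 + |(a : ℝ)|)
  have n2 := Real.sqrt_nonneg (1 + |(b : ℝ)|)
  have n3 := Real.sqrt_nonneg (1 + |(c : ℝ)|)
  nlinarith [mul_nonneg n1 n2, mul_nonneg n1 n3, mul_nonneg n2 n3]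

lemma quad_bound (a : ℤ → ℝ) (ha : ∀ k, 0 ≤ a k) (k j1 j2 j3 : ℤ) (h : k = j1 - j2 + j3) :
    |(k : ℝ)| * (a k * a j1 * a j2 * a j3) ≤
      ((1 + |(k : ℝ)|) * a k ^ 2) * (a j2 * a j3) + ((1 + |(j1 : ℝ)|) * a j1 ^ 2) * (a j2 * a j3) +
      (((1 + |(k : ℝ)|) * a k ^ 2) * (a j1 * a j3) + ((1 + |(j2 : ℝ)|) * a j2 ^ 2) * (a j1 * a j3)) +
      (((1 + |(k : ℝ)|) * a k ^ 2) * (a j1 * a j2) + ((1 + |(j3 : ℝ)|) * a j3 ^ 2) * (a j1 * a j2)) := by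
  have h0 := sqrt_wt_le k j1 j2 j3 h
  have hk : |(k : ℝ)| ≤ √(1 + |(k : ℝ)|) * √(1 + |(k : ℝ)|) := by
    rw [Real.mul_self_sqrt (by positivity)]; linarith
  have s0 := Real.sq_sqrt (show 0 ≤ 1 + |(k : ℝ)| by positivity)
  have s1 := Real.sq_sqrt (show 0 ≤ 1 + |(j1 : ℝ)| by positivity)
  have s2 := Real.sq_sqrt (show 0 ≤ 1 + |(j2 : ℝ)| by positivity)
  have s3 := Real.sq_sqrt (show 0 ≤ 1 + |(j3 : ℝ)| by positivity)
  have n0 := Real.sqrt_nonneg (1 + |(k : ℝ)|)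
  rw [← s0, ← s1, ← s2, ← s3]
  generalize √(1 + |(k : ℝ)|) = w0 at *
  generalize √(1 + |(j1 : ℝ)|) = w1 at *
  generalize √(1 + |(j2 : ℝ)|) = w2 at *
  generalize √(1 + |(j3 : ℝ)|) = w3 at *
  have b0 := ha k
  have b1 := ha j1
  have b2 := ha j2
  have b3 := ha j3
  generalize a k = a0 at *
  generalize a j1 = a1 at *
  generalize a j2 = a2 at *
  generalize a j3 = a3 at *
  have key : |(k : ℝ)| * (a0 * a1 * a2 * a3) ≤ w0 * (w1 + w2 + w3) * (a0 * a1 * a2 * a3) := by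
    apply mul_le_mul_of_nonneg_right _ (by positivity)
    exact hk.trans (mul_le_mul_of_nonneg_left h0 n0)
  have amgm : ∀ x y z : ℝ, 0 ≤ z → x * y * z ≤ x ^ 2 * z + y ^ 2 * z := by
    intro x y z hz
    have : x * y ≤ x ^ 2 + y ^ 2 := by nlinarith [sq_nonneg (x - y), sq_nonneg x, sq_nonneg y]
    nlinarith
  have c1 := amgm (w0 * a0) (w1 * a1) (a2 * a3) (by positivity)
  have c2 := amgm (w0 * a0) (w2 * a2) (a1 * a3) (by positivity)
  have c3 := amgm (w0 * a0) (w3 * a3) (a1 * a2) (by positivity)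
  nlinarith

/-- the phase factor -/
noncomputable def ph (t : ℝ) (n : ℤ) : ℂ := Complex.exp (-Complex.I * (n : ℂ) / (4 * (t : ℂ)))

lemma ph_norm (t : ℝ) (n : ℤ) : ‖ph t n‖ = 1 := by
  have : -Complex.I * (n : ℂ) / (4 * (t : ℂ)) = ((-(n : ℝ) / (4 * t) : ℝ) : ℂ) * Complex.I := by
    push_cast; ring
  rw [ph, this, Complex.norm_exp_ofReal_mul_I]

lemma ph_conj (t : ℝ) (n : ℤ) : (starRingEnd ℂ) (ph t n) = ph t (-n) := by
  rw [ph, ph, ← Complex.exp_conj]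
  congr 1
  have : (starRingEnd ℂ) 4 = 4 := Complex.conj_ofReal 4
  simp [this]

/-- the quartic summand -/
noncomputable def quart (A : ℤ → ℂ) (t : ℝ) (p : ℤ × ℤ × ℤ) : ℂ :=
  (starRingEnd ℂ) (A p.1) *
    (ph t (p.1 ^ 2 - p.2.1 ^ 2 + p.2.2 ^ 2 - (p.1 - p.2.1 + p.2.2) ^ 2)
      * A p.2.1 * (starRingEnd ℂ) (A p.2.2) * A (p.1 - p.2.1 + p.2.2))

lemma quart_summable {s : ℝ} (hs : 1 / 2 < s) {A : ℤ → ℂ} (hA : wMem s A) (t : ℝ) :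
    Summable (fun p : ℤ × ℤ × ℤ => (p.1 : ℂ) * quart A t p) := by
  have hv := hA.summable_sq hs
  have ha := hA.summable_norm hs
  have v0 : ∀ k : ℤ, 0 ≤ (1 + |(k : ℝ)|) * ‖A k‖ ^ 2 := fun k => by positivity
  have a0 : ∀ k : ℤ, 0 ≤ ‖A k‖ := fun k => norm_nonneg _
  have H := summable_triple hv ha ha v0 a0 a0
  have i1 := H (fun p => (p.1, p.2.2, p.1 - p.2.1 + p.2.2))
    (by rintro ⟨a, b, c⟩ ⟨a', b', c'⟩ h; simp only [Prod.mk.injEq] at h ⊢; omega)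
  have i2 := H (fun p => (p.2.1, p.2.2, p.1 - p.2.1 + p.2.2))
    (by rintro ⟨a, b, c⟩ ⟨a', b', c'⟩ h; simp only [Prod.mk.injEq] at h ⊢; omega)
  have i3 := H (fun p => (p.1, p.2.1, p.1 - p.2.1 + p.2.2))
    (by rintro ⟨a, b, c⟩ ⟨a', b', c'⟩ h; simp only [Prod.mk.injEq] at h ⊢; omega)
  have i4 := H (fun p => (p.2.2, p.2.1, p.1 - p.2.1 + p.2.2))
    (by rintro ⟨a, b, c⟩ ⟨a', b', c'⟩ h; simp only [Prod.mk.injEq] at h ⊢; omega)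
  have i5 := H (fun p => (p.1, p.2.1, p.2.2))
    (by rintro ⟨a, b, c⟩ ⟨a', b', c'⟩ h; simp only [Prod.mk.injEq] at h ⊢; omega)
  have i6 := H (fun p => (p.1 - p.2.1 + p.2.2, p.2.1, p.2.2))
    (by rintro ⟨a, b, c⟩ ⟨a', b', c'⟩ h; simp only [Prod.mk.injEq] at h ⊢; omega)
  refine Summable.of_norm_bounded (((i1.add i2).add (i3.add i4)).add (i5.add i6)) ?_
  rintro ⟨k, j1, j2⟩
  have := quad_bound (fun k => ‖A k‖) a0 k j1 j2 (k - j1 + j2) (by ring)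
  refine le_trans (le_of_eq ?_) this
  simp only [quart, norm_mul, ph_norm, RCLike.norm_conj, Complex.norm_intCast]
  ring

lemma quart_real {s : ℝ} (hs : 1 / 2 < s) {A : ℤ → ℂ} (hA : wMem s A) (t : ℝ) :
    (starRingEnd ℂ) (∑' p : ℤ × ℤ × ℤ, (p.1 : ℂ) * quart A t p) =
      ∑' p : ℤ × ℤ × ℤ, (p.1 : ℂ) * quart A t p := by
  let σ₁ : ℤ × ℤ × ℤ ≃ ℤ × ℤ × ℤ :=
    ⟨fun p => (p.2.2, p.2.1, p.1), fun p => (p.2.2, p.2.1, p.1), fun p => rfl, fun p => rfl⟩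
  let σ₂ : ℤ × ℤ × ℤ ≃ ℤ × ℤ × ℤ :=
    ⟨fun p => (p.2.1, p.1, p.1 - p.2.1 + p.2.2), fun p => (p.2.1, p.1, p.1 - p.2.1 + p.2.2),
      fun p => by ext <;> simp <;> ring, fun p => by ext <;> simp <;> ring⟩
  let σ₃ : ℤ × ℤ × ℤ ≃ ℤ × ℤ × ℤ :=
    ⟨fun p => (p.1, p.1 - p.2.1 + p.2.2, p.2.2), fun p => (p.1, p.1 - p.2.1 + p.2.2, p.2.2),
      fun p => by ext <;> simp <;> ring, fun p => by ext <;> simp <;> ring⟩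
  have hS := (quart_summable hs hA t).hasSum
  set T := ∑' p : ℤ × ℤ × ℤ, (p.1 : ℂ) * quart A t p
  have q1 : ∀ p, quart A t (σ₁ p) = quart A t p := by
    rintro ⟨k, j1, j2⟩
    simp only [quart, σ₁, Equiv.coe_fn_mk]
    rw [show j2 - j1 + k = k - j1 + j2 by ring,
      show j2 ^ 2 - j1 ^ 2 + k ^ 2 - (k - j1 + j2) ^ 2 =
        k ^ 2 - j1 ^ 2 + j2 ^ 2 - (k - j1 + j2) ^ 2 by ring]
    ring
  have q2 : ∀ p, (starRingEnd ℂ) (quart A t (σ₂ p)) = quart A t p := by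
    rintro ⟨k, j1, j2⟩
    simp only [quart, σ₂, Equiv.coe_fn_mk, map_mul, Complex.conj_conj, ph_conj]
    rw [show j1 - k + (k - j1 + j2) = j2 by ring,
      show -(j1 ^ 2 - k ^ 2 + (k - j1 + j2) ^ 2 - j2 ^ 2) =
        k ^ 2 - j1 ^ 2 + j2 ^ 2 - (k - j1 + j2) ^ 2 by ring]
    ring
  have q3 : ∀ p, quart A t (σ₃ p) = quart A t p := by
    rintro ⟨k, j1, j2⟩
    simp only [quart, σ₃, Equiv.coe_fn_mk]
    rw [show k - (k - j1 + j2) + j2 = j1 by ring,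
      show k ^ 2 - (k - j1 + j2) ^ 2 + j2 ^ 2 - j1 ^ 2 =
        k ^ 2 - j1 ^ 2 + j2 ^ 2 - (k - j1 + j2) ^ 2 by ring]
    ring
  have s1 : HasSum (fun p : ℤ × ℤ × ℤ => (p.2.2 : ℂ) * quart A t p) T := by
    have := (σ₁.hasSum_iff).2 hS
    convert this using 2 with p
    simp only [Function.comp, q1]
    simp [σ₁]
  have s2 : HasSum (fun p : ℤ × ℤ × ℤ => (p.2.1 : ℂ) * quart A t p) ((starRingEnd ℂ) T) := by
    have := (σ₂.hasSum_iff).2 (Complex.hasSum_conj'.2 hS)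
    convert this using 2 with p
    simp only [Function.comp, map_mul, q2]
    simp [σ₂]
  have s3 : HasSum (fun p : ℤ × ℤ × ℤ => ((p.1 - p.2.1 + p.2.2 : ℤ) : ℂ) * quart A t p)
      ((starRingEnd ℂ) T) := by
    have := (σ₃.hasSum_iff).2 s2
    convert this using 2 with p
    simp only [Function.comp, q3]
    simp [σ₃]
  have s4 : HasSum (fun p : ℤ × ℤ × ℤ => (p.1 : ℂ) * quart A t p + (p.2.2 : ℂ) * quart A t p)
      ((starRingEnd ℂ) T + (starRingEnd ℂ) T) := by
    convert s2.add s3 using 2 with p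
    push_cast
    ring
  have e := s4.unique (hS.add s1)
  linear_combination e / 2

/-- diagonal operators on `ℓ²` -/
noncomputable def diagL (d : ℤ → ℝ) (hd : ∀ k, |d k| ≤ 1) :
    lp (fun _ : ℤ => ℂ) 2 →L[ℝ] lp (fun _ : ℤ => ℂ) 2 :=
  LinearMap.mkContinuous
    { toFun := fun f => ⟨fun k => (d k : ℂ) * f k, (lp.memℓp f).mono' (fun k => by
        rw [norm_mul, Complex.norm_real, Real.norm_eq_abs]
        exact mul_le_of_le_one_left (norm_nonneg _) (hd k))⟩
      map_add' := fun f g => by ext k; exact mul_add _ _ _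
      map_smul' := fun c f => by ext k; simp; ring } 1 (fun f => by
      rw [one_mul]
      refine lp.norm_mono (by simp) fun k => ?_
      simp only [LinearMap.coe_mk, AddHom.coe_mk]
      rw [norm_mul, Complex.norm_real, Real.norm_eq_abs]
      exact mul_le_of_le_one_left (norm_nonneg _) (hd k))

lemma diagL_apply (d : ℤ → ℝ) (hd : ∀ k, |d k| ≤ 1) (f : lp (fun _ : ℤ => ℂ) 2) (k : ℤ) :
    diagL d hd f k = (d k : ℂ) * f k := rfl

/-- coordinate evaluation on `ℓ²` -/
noncomputable def evL (k : ℤ) : lp (fun _ : ℤ => ℂ) 2 →L[ℝ] ℂ :=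
  LinearMap.mkContinuous
    { toFun := fun f => f k
      map_add' := fun f g => by simp
      map_smul' := fun c f => by simp } 1 (fun f => by
      rw [one_mul]
      exact lp.norm_apply_le_norm (by simp) f k)

lemma evL_apply (k : ℤ) (f : lp (fun _ : ℤ => ℂ) 2) : evL k f = f k := rfl

lemma HasSum.congr_fun_aux {f g : ℤ → ℂ} {a : ℂ} (h : HasSum f a) (hfg : ∀ k, g k = f k) :
    HasSum g a := by
  rwa [show g = f from funext hfg]

lemma momentum_hasSum {s : ℝ} (hs : 1 / 2 < s) {A : ℤ → ℂ} (hA : wMem s A) (t : ℝ) :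
    HasSum (fun k : ℤ => (k : ℂ) * ((starRingEnd ℂ) (A k) * cubicSum A t k))
      (∑' p : ℤ × ℤ × ℤ, (p.1 : ℂ) * quart A t p) := by
  have hS := quart_summable hs hA t
  have h := hS.hasSum.prod_fiberwise (fun k => (hS.prod_factor k).hasSum)
  convert h using 2 with k
  simp only [quart, cubicSum, ph]
  rw [tsum_mul_left, tsum_mul_left]

end aux

/-- Conservation of momentum: for a `C¹`-in-`ℓ^{2,s}` solution of the coefficient system,
the momentum `∑_k k |A_k(t)|²` converges absolutely and is constant on `(t₁,t₂)`. -/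
theorem momentum_conservation (s t₁ t₂ M ε : ℝ) (hs : 1 / 2 < s)
    (ht₁ : 0 < t₁) (ht : t₁ < t₂) (hε : ε = 1 ∨ ε = -1)
    (A : ℝ → ℤ → ℂ)
    (hmem : ∀ t ∈ Ioo t₁ t₂, wMem s (A t))
    (hC1 : C1IntoL2s s t₁ t₂ A)
    (hode : ∀ t ∈ Ioo t₁ t₂, ∀ k : ℤ,
      Complex.I * deriv (fun τ : ℝ => A τ k) t =
        (ε : ℂ) * (1 / (8 * (Real.pi : ℂ) * t)) * cubicSum (A t) t k
          - ((M : ℂ) / (4 * (Real.pi : ℂ) * t)) * A t k) :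
    (∀ t ∈ Ioo t₁ t₂, Summable (fun k : ℤ => |(k : ℝ) * ‖A t k‖ ^ 2|)) ∧
    ∀ t ∈ Ioo t₁ t₂, ∀ t' ∈ Ioo t₁ t₂,
      ∑' k : ℤ, (k : ℝ) * ‖A t k‖ ^ 2 = ∑' k : ℤ, (k : ℝ) * ‖A t' k‖ ^ 2 := by
  obtain ⟨B, hB, hBC⟩ := hC1
  refine ⟨fun t ht => ?_, ?_⟩
  · refine Summable.of_nonneg_of_le (fun k => abs_nonneg _) (fun k => ?_)
      ((hmem t ht).summable_sq hs)
    rw [abs_mul, abs_of_nonneg (sq_nonneg ‖A t k‖)]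
    gcongr
    linarith
  have hwpos : ∀ k : ℤ, 0 < (1 + |(k : ℝ)|) ^ s := fun k => by positivity
  have hw2 : ∀ k : ℤ, |(k : ℝ)| ≤ ((1 + |(k : ℝ)|) ^ s) ^ 2 := fun k => by
    have h1 := wt_le (show 1 < 2 * s by linarith) k
    have e2 : (1 + |(k : ℝ)|) ^ (2 * s) = ((1 + |(k : ℝ)|) ^ s) ^ 2 := by
      rw [← Real.rpow_natCast, ← Real.rpow_mul (by positivity)]; congr 1; push_cast; ring
    linarith
  generalize hw : (fun k : ℤ => (1 + |(k : ℝ)|) ^ s) = w at *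
  have hwk : ∀ k : ℤ, (1 + |(k : ℝ)|) ^ s = w k := fun k => congrFun hw k
  simp only [hwk] at hB hwpos hw2
  have hwne : ∀ k, (w k : ℂ) ≠ 0 := fun k => by exact_mod_cast (hwpos k).ne'
  have hd : ∀ k : ℤ, |(k : ℝ) / w k ^ 2| ≤ 1 := fun k => by
    rw [abs_div, abs_of_pos (pow_pos (hwpos k) 2), div_le_one (pow_pos (hwpos k) 2)]
    exact hw2 k
  have hdiff : ∀ t ∈ Ioo t₁ t₂, HasDerivAt B (deriv B t) t := fun t ht =>
    ((hBC.differentiableOn (by simp)).differentiableAt (isOpen_Ioo.mem_nhds ht)).hasDerivAt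
  have hQ : ∀ t ∈ Ioo t₁ t₂, inner ℂ (B t) (diagL _ hd (B t)) =
      ((∑' k : ℤ, (k : ℝ) * ‖A t k‖ ^ 2 : ℝ) : ℂ) := by
    intro t ht
    rw [lp.inner_eq_tsum, Complex.ofReal_tsum]
    congr 1
    ext k
    rw [diagL_apply, hB t ht k, RCLike.inner_apply]
    push_cast
    rw [← Complex.mul_conj', map_mul, Complex.conj_ofReal]
    have := hwne k
    field_simp
  have hder : ∀ t ∈ Ioo t₁ t₂, HasDerivAt (fun τ => inner ℂ (B τ) (diagL _ hd (B τ))) 0 t := by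
    intro t ht
    have hD : HasDerivAt (fun τ => diagL _ hd (B τ)) (diagL _ hd (deriv B t)) t :=
      (diagL _ hd).hasFDerivAt.comp_hasDerivAt t (hdiff t ht)
    have h := (hdiff t ht).inner ℂ hD
    refine h.congr_deriv ?_
    symm
    have hs1 := (lp.hasSum_inner (𝕜 := ℂ) (B t) (diagL _ hd (deriv B t))).add
      (lp.hasSum_inner (𝕜 := ℂ) (deriv B t) (diagL _ hd (B t)))
    have hA' : ∀ k, deriv (fun τ : ℝ => A τ k) t = (w k : ℂ)⁻¹ * deriv B t k := by
      intro k
      have h1 : HasDerivAt (fun τ => (w k : ℂ)⁻¹ * evL k (B τ))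
          ((w k : ℂ)⁻¹ * evL k (deriv B t)) t :=
        ((evL k).hasFDerivAt.comp_hasDerivAt t (hdiff t ht)).const_mul _
      have h2 : (fun τ : ℝ => A τ k) =ᶠ[nhds t] (fun τ => (w k : ℂ)⁻¹ * evL k (B τ)) := by
        filter_upwards [isOpen_Ioo.mem_nhds ht] with τ hτ
        rw [evL_apply, hB τ hτ k, inv_mul_cancel_left₀ (hwne k)]
      rw [h2.deriv_eq, h1.deriv, evL_apply]
    have hm := momentum_hasSum hs (hmem t ht) t
    have hre := quart_real hs (hmem t ht) t
    set T := ∑' p : ℤ × ℤ × ℤ, (p.1 : ℂ) * quart (A t) t p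
    have hm2 := Complex.hasSum_conj'.2 hm
    rw [hre] at hm2
    have hm3 := (hm.sub hm2).mul_left (-Complex.I * ((ε : ℂ) * (1 / (8 * (Real.pi : ℂ) * t))))
    rw [sub_self, mul_zero] at hm3
    refine hm3.unique (HasSum.congr_fun_aux hs1 fun k => ?_)
    have hB' : deriv B t k = w k * deriv (fun τ : ℝ => A τ k) t := by
      rw [hA' k, mul_inv_cancel_left₀ (hwne k)]
    have ho : deriv (fun τ : ℝ => A τ k) t =
        -Complex.I * ((ε : ℂ) * (1 / (8 * (Real.pi : ℂ) * t)) * cubicSum (A t) t k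
          - ((M : ℂ) / (4 * (Real.pi : ℂ) * t)) * A t k) := by
      rw [← hode t ht k, ← mul_assoc]
      simp
    have h8 : (starRingEnd ℂ) 8 = 8 := Complex.conj_ofReal 8
    have h4 : (starRingEnd ℂ) 4 = 4 := Complex.conj_ofReal 4
    have hk : (starRingEnd ℂ) (k : ℂ) = k := by simp
    simp only [diagL_apply, hB', hB t ht k, RCLike.inner_apply, ho, map_mul, map_sub, map_div₀,
      Complex.conj_ofReal, map_neg, Complex.conj_I, map_one, h8, h4, hk, Complex.conj_conj]
    push_cast
    have hcancel : (k : ℂ) / (w k : ℂ) ^ 2 * w k * w k = k := by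
      have := hwne k
      field_simp
    generalize (k : ℂ) / (w k : ℂ) ^ 2 = dk at *
    rw [← hcancel]
    ring
  intro t ht t' ht'
  have := isOpen_Ioo.is_const_of_deriv_eq_zero (isPreconnected_Ioo)
    (fun τ hτ => (hder τ hτ).differentiableAt.differentiableWithinAt)
    (fun τ hτ => (hder τ hτ).deriv) ht ht'
  rw [hQ t ht, hQ t' ht'] at this
  exact_mod_cast this
end

section
/- Let 1 ≤ p < ∞. There exists a constant C = C(p) such that for all M, N, P ∈ ℓ^p(ℤ), the sequence k ↦ ∑_{(j₁,j₂,j₃)∈NR_k} M_{j₁} N_{j₂} P_{j₃}/(k² − j₁² + j₂² − j₃²) is absolutely convergent for each k ∈ ℤ and its ℓ^p(ℤ) norm is at most C ‖M‖_{ℓ^p} ‖N‖_{ℓ^p} ‖P‖_{ℓ^p}. -/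
open scoped BigOperators

/-- The non-resonant triple sum with the non-resonant denominator
`k² - j₁² + j₂² - j₃²`, parametrized by the two free indices `(j₁, j₂)` with
`j₃ = k - j₁ + j₂`.  Since in `ℂ` division by zero gives `0`, the terms with vanishing
denominator (the resonant ones, excluded from `NR_k`) contribute nothing. -/
noncomputable def nrQuotientSum (M N P : ℤ → ℂ) (k : ℤ) : ℂ :=
  ∑' j : ℤ × ℤ,
    M j.1 * N j.2 * P (k - j.1 + j.2) /
      ((k ^ 2 - j.1 ^ 2 + j.2 ^ 2 - (k - j.1 + j.2) ^ 2 : ℤ) : ℂ)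


/-- Shifted indices `(j₁, j₂) ↦ (k - j₁, j₁ - j₂)`. -/
def nrShift (k : ℤ) : ℤ × ℤ ≃ ℤ × ℤ where
  toFun j := (k - j.1, j.1 - j.2)
  invFun a := (k - a.1, k - a.1 - a.2)
  left_inv j := by ext <;> simp
  right_inv j := by ext <;> simp

/-- Reparametrization `(k, j₁, j₂) ↦ (j₁, j₂, j₃)`. -/
def nrTriple : ℤ × (ℤ × ℤ) ≃ ℤ × (ℤ × ℤ) where
  toFun x := (x.2.1, (x.2.2, x.1 - x.2.1 + x.2.2))
  invFun y := (y.2.2 + y.1 - y.2.1, (y.1, y.2.1))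
  left_inv j := by ext <;> simp <;> ring
  right_inv j := by ext <;> simp <;> ring

/-- The weight. -/
noncomputable def nrW (a : ℤ × ℤ) : ℝ := |(2 * (a.1 : ℝ) * a.2)|⁻¹

lemma nrW_nonneg (a : ℤ × ℤ) : 0 ≤ nrW a := by unfold nrW; positivity

lemma nrW_le_one (a : ℤ × ℤ) : nrW a ≤ 1 := by
  unfold nrW
  by_cases h : 2 * a.1 * a.2 = 0
  · have h2 : 2 * (a.1 : ℝ) * a.2 = 0 := by exact_mod_cast h
    simp [h2]
  · apply inv_le_one_of_one_le₀
    have := Int.one_le_abs h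
    exact_mod_cast this

lemma nrW_summable (q : ℝ) (hq : 1 < q) : Summable (fun a => nrW a ^ q) := by
  have h1 : Summable (fun n : ℤ => |(n : ℝ)| ^ (-q)) := Real.summable_abs_int_rpow hq
  have h2 := (h1.mul_of_nonneg h1 (fun n => by positivity) (fun n => by positivity)).mul_left
    (|(2 : ℝ)| ^ (-q))
  refine h2.congr fun a => ?_
  unfold nrW
  rw [abs_mul, abs_mul, Real.inv_rpow (by positivity), ← Real.rpow_neg (by positivity),
    Real.mul_rpow (by positivity) (by positivity), Real.mul_rpow (by positivity) (by positivity)]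
  ring

lemma nr_holder (p : ℝ) (hp : 1 ≤ p) : ∃ C : ℝ, 0 < C ∧ ∀ (k : ℤ) (F : ℤ × ℤ → ℝ),
    (∀ j, 0 ≤ F j) → Summable (fun j => F j ^ p) →
    Summable (fun j => F j * nrW (nrShift k j)) ∧
    (∑' j, F j * nrW (nrShift k j)) ^ p ≤ C ^ p * ∑' j, F j ^ p := by
  rcases hp.eq_or_lt with rfl | hp1
  · refine ⟨1, one_pos, fun k F hF hs => ?_⟩
    simp only [Real.rpow_one, one_mul] at *
    have hle : ∀ j, F j * nrW (nrShift k j) ≤ F j := fun j =>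
      mul_le_of_le_one_right (hF j) (nrW_le_one _)
    have hs' : Summable (fun j => F j * nrW (nrShift k j)) :=
      Summable.of_nonneg_of_le (fun j => mul_nonneg (hF j) (nrW_nonneg _)) hle hs
    exact ⟨hs', hs'.tsum_le_tsum hle hs⟩
  · have hpq := Real.HolderConjugate.conjExponent hp1
    set q := p.conjExponent
    have hW := nrW_summable q hpq.symm.lt
    refine ⟨(∑' a, nrW a ^ q) ^ (1 / q) + 1, ?_, fun k F hF hs => ?_⟩
    · have : 0 ≤ ∑' a, nrW a ^ q := tsum_nonneg fun a => Real.rpow_nonneg (nrW_nonneg a) _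
      positivity
    have hW0 : 0 ≤ ∑' a, nrW a ^ q := tsum_nonneg fun a => Real.rpow_nonneg (nrW_nonneg a) _
    have hF0 : 0 ≤ ∑' a, F a ^ p := tsum_nonneg fun a => Real.rpow_nonneg (hF a) _
    have hWk : Summable (fun j => nrW (nrShift k j) ^ q) := (nrShift k).summable_iff.mpr hW
    have hWt : ∑' j, nrW (nrShift k j) ^ q = ∑' a, nrW a ^ q :=
      (nrShift k).tsum_eq (fun a => nrW a ^ q)
    obtain ⟨h1, h2⟩ := Real.summable_and_inner_le_Lp_mul_Lq_tsum_of_nonneg hpq hF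
      (fun j => nrW_nonneg (nrShift k j)) hs hWk
    refine ⟨h1, ?_⟩
    rw [hWt] at h2
    have h3 : ∑' j, F j * nrW (nrShift k j) ≤
        ((∑' a, nrW a ^ q) ^ (1 / q) + 1) * (∑' j, F j ^ p) ^ (1 / p) := by
      refine h2.trans ?_
      rw [mul_comm]
      gcongr
      linarith
    have h4 := Real.rpow_le_rpow
      (tsum_nonneg fun j => mul_nonneg (hF j) (nrW_nonneg (nrShift k j))) h3 hpq.nonneg
    rw [Real.mul_rpow (by positivity) (by positivity), ← Real.rpow_mul hF0,
      one_div_mul_cancel hpq.ne_zero, Real.rpow_one] at h4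
    exact h4

/-- For `1 ≤ p < ∞`, the non-resonant sum with denominator `k² - j₁² + j₂² - j₃²`
maps `ℓ^p(ℤ) × ℓ^p(ℤ) × ℓ^p(ℤ)` boundedly into `ℓ^p(ℤ)`. -/
theorem nr_quotient_sum_lp_bound (p : ℝ) (hp : 1 ≤ p) :
    ∃ C : ℝ, 0 < C ∧ ∀ M N P : ℤ → ℂ,
      Summable (fun k : ℤ => ‖M k‖ ^ p) →
      Summable (fun k : ℤ => ‖N k‖ ^ p) →
      Summable (fun k : ℤ => ‖P k‖ ^ p) →
      (∀ k : ℤ, Summable (fun j : ℤ × ℤ =>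
        ‖M j.1 * N j.2 * P (k - j.1 + j.2) /
          ((k ^ 2 - j.1 ^ 2 + j.2 ^ 2 - (k - j.1 + j.2) ^ 2 : ℤ) : ℂ)‖)) ∧
      Summable (fun k : ℤ => ‖nrQuotientSum M N P k‖ ^ p) ∧
      (∑' k : ℤ, ‖nrQuotientSum M N P k‖ ^ p) ^ (1 / p) ≤
        C * (∑' k : ℤ, ‖M k‖ ^ p) ^ (1 / p) * (∑' k : ℤ, ‖N k‖ ^ p) ^ (1 / p) *
          (∑' k : ℤ, ‖P k‖ ^ p) ^ (1 / p) := by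
  obtain ⟨C, hC, H⟩ := nr_holder p hp
  have hp0 : 0 < p := by linarith
  refine ⟨C, hC, fun M N P hM hN hP => ?_⟩
  have hterm : ∀ (k : ℤ) (j : ℤ × ℤ), ‖M j.1 * N j.2 * P (k - j.1 + j.2) /
      ((k ^ 2 - j.1 ^ 2 + j.2 ^ 2 - (k - j.1 + j.2) ^ 2 : ℤ) : ℂ)‖ =
      ‖M j.1‖ * ‖N j.2‖ * ‖P (k - j.1 + j.2)‖ * nrW (nrShift k j) := by
    intro k j
    have h : k ^ 2 - j.1 ^ 2 + j.2 ^ 2 - (k - j.1 + j.2) ^ 2 = 2 * (k - j.1) * (j.1 - j.2) := by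
      ring
    rw [h, norm_div, norm_mul, norm_mul, Complex.norm_intCast, div_eq_mul_inv]
    simp [nrW, nrShift]
  have hNP := hN.mul_of_nonneg hP (fun n => by positivity) (fun n => by positivity)
  have hMNP := hM.mul_of_nonneg hNP (fun n => by positivity)
    (fun n => mul_nonneg (by positivity) (by positivity))
  have hG := nrTriple.summable_iff.mpr hMNP
  have hGt := nrTriple.tsum_eq (fun x : ℤ × (ℤ × ℤ) => ‖M x.1‖ ^ p * (‖N x.2.1‖ ^ p * ‖P x.2.2‖ ^ p))
  have hpow : ∀ (k : ℤ) (j : ℤ × ℤ), (‖M j.1‖ * ‖N j.2‖ * ‖P (k - j.1 + j.2)‖) ^ p =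
      ‖M j.1‖ ^ p * (‖N j.2‖ ^ p * ‖P (k - j.1 + j.2)‖ ^ p) := by
    intro k j
    rw [Real.mul_rpow (by positivity) (by positivity), Real.mul_rpow (by positivity) (by positivity),
      mul_assoc]
  have hG' : Summable (fun x : ℤ × (ℤ × ℤ) =>
      (‖M x.2.1‖ * ‖N x.2.2‖ * ‖P (x.1 - x.2.1 + x.2.2)‖) ^ p) :=
    hG.congr fun x => (hpow x.1 x.2).symm
  have htot : ∑' k : ℤ, ∑' j : ℤ × ℤ, (‖M j.1‖ * ‖N j.2‖ * ‖P (k - j.1 + j.2)‖) ^ p =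
      (∑' k, ‖M k‖ ^ p) * ((∑' k, ‖N k‖ ^ p) * ∑' k, ‖P k‖ ^ p) := by
    rw [← hG'.tsum_prod, hN.tsum_mul_tsum hP hNP, hM.tsum_mul_tsum hNP hMNP, ← hGt]
    exact tsum_congr fun x => hpow x.1 x.2
  have hk := fun k : ℤ => H k (fun j => ‖M j.1‖ * ‖N j.2‖ * ‖P (k - j.1 + j.2)‖)
    (fun j => by positivity) (hG'.prod_factor k)
  have hS : ∀ k : ℤ, Summable (fun j : ℤ × ℤ =>
        ‖M j.1 * N j.2 * P (k - j.1 + j.2) /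
          ((k ^ 2 - j.1 ^ 2 + j.2 ^ 2 - (k - j.1 + j.2) ^ 2 : ℤ) : ℂ)‖) :=
    fun k => (hk k).1.congr fun j => (hterm k j).symm
  have hb : ∀ k : ℤ, ‖nrQuotientSum M N P k‖ ^ p ≤
      C ^ p * ∑' j : ℤ × ℤ, (‖M j.1‖ * ‖N j.2‖ * ‖P (k - j.1 + j.2)‖) ^ p := by
    intro k
    refine le_trans (Real.rpow_le_rpow (norm_nonneg _) ?_ hp0.le) (hk k).2
    refine (norm_tsum_le_tsum_norm (hS k)).trans (le_of_eq ?_)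
    exact tsum_congr (hterm k)
  have hR := hG'.prod.mul_left (C ^ p)
  have hL : Summable (fun k : ℤ => ‖nrQuotientSum M N P k‖ ^ p) :=
    Summable.of_nonneg_of_le (fun k => by positivity) hb hR
  refine ⟨hS, hL, ?_⟩
  have hfin := hL.tsum_le_tsum hb hR
  rw [tsum_mul_left, htot] at hfin
  have hA : 0 ≤ ∑' k, ‖M k‖ ^ p := tsum_nonneg fun k => by positivity
  have hB : 0 ≤ ∑' k, ‖N k‖ ^ p := tsum_nonneg fun k => by positivity
  have hD : 0 ≤ ∑' k, ‖P k‖ ^ p := tsum_nonneg fun k => by positivity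
  have h4 := Real.rpow_le_rpow (tsum_nonneg fun k => by positivity) hfin
    (by positivity : 0 ≤ 1 / p)
  refine h4.trans (le_of_eq ?_)
  rw [Real.mul_rpow (by positivity) (by positivity), Real.mul_rpow hA (by positivity),
    Real.mul_rpow hB hD, ← Real.rpow_mul hC.le, mul_one_div_cancel hp0.ne', Real.rpow_one]
  ring
end

section
/- Let p, q be positive integers with q odd and gcd(p,q) = 1, and set t := p/(2πq). Let 0 < η < 1 and let α ∈ ℓ¹(ℤ), with associated continuous 2π-periodic function f(ξ) := ∑_{k∈ℤ} α_k e^{−ikξ}. Assume f(ξ) = 0 for every ξ ∈ ℝ with dist(ξ, 2πℤ) ≥ ηπ/p. Then for every x ∈ ℝ with dist(x, (1/q)ℤ) > η/q, one has ∑_{k∈ℤ} α_k e^{i(x−k)²/(4t)} = 0 (the sum converging absolutely). In particular, the free Schrödinger evolution e^{itΔ}(∑_k α_k δ_k)(x) = ∑_k α_k e^{i(x−k)²/(4t)}/√(4πit) vanishes at the Talbot time t = p/(2πq) at every point x at distance greater than η/q from (1/q)ℤ. -/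
open scoped BigOperators Real


lemma periodic_expansion (N : ℕ) [NeZero N] (g : ℤ → ℂ) (hg : Function.Periodic g (N : ℤ)) :
    ∃ c : ZMod N → ℂ, ∀ k : ℤ, g k =
      ∑ m : ZMod N, c m * Complex.exp (2 * π * Complex.I * ((m.val : ℂ) * k) / N) := by
  let Φ : ZMod N → ℂ := fun j => g (j.val : ℤ)
  refine ⟨fun m => (N : ℂ)⁻¹ * ZMod.dft Φ m, fun k => ?_⟩
  have h1 : g k = Φ (k : ZMod N) := by
    simp only [Φ]
    rw [ZMod.val_intCast]
    have h := hg.int_mul (k / N) (k % N)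
    have e : k % (N : ℤ) + k / (N : ℤ) * (N : ℤ) = k := Int.emod_add_ediv_mul k N
    simp only [Int.cast_id] at h
    rwa [e] at h
  have h2 : Φ (k : ZMod N) = ZMod.dft.symm (ZMod.dft Φ) (k : ZMod N) := by simp
  rw [h1, h2, ZMod.invDFT_apply, smul_eq_mul, Finset.mul_sum]
  refine Finset.sum_congr rfl fun m _ => ?_
  have h3 : m * (k : ZMod N) = (((m.val : ℤ) * k : ℤ) : ZMod N) := by simp
  rw [h3, ZMod.stdAddChar_coe, smul_eq_mul]
  push_cast
  ring

/-- Linear Talbot effect: at the Talbot time `t = p/(2πq)` (`q` odd, `gcd(p,q)=1`), if the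
`2π`-periodic Fourier transform `f(ξ) = ∑_k α_k e^{−ikξ}` of `∑_k α_k δ_k` vanishes at every
`ξ` at distance `≥ ηπ/p` from `2πℤ`, then the free evolution
`∑_k α_k e^{i(x−k)²/(4t)}` vanishes at every `x` at distance `> η/q` from `(1/q)ℤ`. -/
theorem linear_talbot_vanishing (p q : ℕ) (hp : 0 < p) (hq : Odd q) (hq0 : 0 < q)
    (hpq : Nat.gcd p q = 1) (η : ℝ) (hη0 : 0 < η) (hη1 : η < 1)
    (α : ℤ → ℂ) (hα : Summable (fun k : ℤ => ‖α k‖))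
    (hsupp : ∀ ξ : ℝ, (∀ n : ℤ, η * π / p ≤ |ξ - 2 * π * n|) →
      ∑' k : ℤ, α k * Complex.exp (-Complex.I * (k : ℂ) * (ξ : ℂ)) = 0) :
    ∀ x : ℝ, (∀ n : ℤ, η / q < |x - (n : ℝ) / q|) →
      Summable (fun k : ℤ =>
        ‖α k * Complex.exp (Complex.I * (((x - (k : ℝ)) ^ 2 : ℝ) : ℂ) /
          (4 * ((p : ℂ) / (2 * π * q))))‖) ∧
      ∑' k : ℤ, α k * Complex.exp (Complex.I * (((x - (k : ℝ)) ^ 2 : ℝ) : ℂ) /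
          (4 * ((p : ℂ) / (2 * π * q)))) = 0 := by
  intro x hx
  have hpC : (p : ℂ) ≠ 0 := by exact_mod_cast hp.ne'
  have hqC : (q : ℂ) ≠ 0 := by exact_mod_cast hq0.ne'
  have hpiC : (π : ℂ) ≠ 0 := by exact_mod_cast Real.pi_ne_zero
  have hpR : (0 : ℝ) < p := by exact_mod_cast hp
  have hqR : (0 : ℝ) < q := by exact_mod_cast hq0
  have hb : ∀ (k : ℤ) (y : ℝ), ‖α k * Complex.exp (-Complex.I * (k : ℂ) * (y : ℂ))‖ = ‖α k‖ := by
    intro k y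
    have : -Complex.I * (k : ℂ) * (y : ℂ) = ((-(k : ℝ) * y : ℝ) : ℂ) * Complex.I := by
      push_cast; ring
    rw [norm_mul, this, Complex.norm_exp_ofReal_mul_I, mul_one]
  constructor
  · refine hα.congr fun k => ?_
    have : Complex.I * (((x - (k : ℝ)) ^ 2 : ℝ) : ℂ) / (4 * ((p : ℂ) / (2 * π * q)))
        = (((x - (k : ℝ)) ^ 2 / (4 * ((p : ℝ) / (2 * π * q))) : ℝ) : ℂ) * Complex.I := by
      push_cast; ring
    rw [norm_mul, this, Complex.norm_exp_ofReal_mul_I, mul_one]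
  haveI : NeZero (2 * p) := ⟨by omega⟩
  let g : ℤ → ℂ := fun k => Complex.exp (Complex.I * π * q * (k : ℂ) ^ 2 / (2 * p))
  have hg : Function.Periodic g ((2 * p : ℕ) : ℤ) := by
    intro k
    simp only [g]
    rw [Complex.exp_eq_exp_iff_exists_int]
    refine ⟨q * (k + p), ?_⟩
    push_cast
    field_simp
    ring
  obtain ⟨c, hc⟩ := periodic_expansion (2 * p) g hg
  let y : ZMod (2 * p) → ℝ := fun m => π * (q * x - m.val) / p
  have key : ∀ k : ℤ, α k * Complex.exp (Complex.I * (((x - (k : ℝ)) ^ 2 : ℝ) : ℂ) /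
          (4 * ((p : ℂ) / (2 * π * q)))) =
      ∑ m : ZMod (2 * p), (Complex.exp (Complex.I * π * q * (x : ℂ) ^ 2 / (2 * p)) * c m) *
        (α k * Complex.exp (-Complex.I * (k : ℂ) * (y m : ℂ))) := by
    intro k
    have e1 : Complex.exp (Complex.I * (((x - (k : ℝ)) ^ 2 : ℝ) : ℂ) /
          (4 * ((p : ℂ) / (2 * π * q)))) =
        Complex.exp (Complex.I * π * q * (x : ℂ) ^ 2 / (2 * p)) *
        Complex.exp (-Complex.I * k * (π * q * x / p)) * g k := by
      simp only [g]
      rw [← Complex.exp_add, ← Complex.exp_add]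
      congr 1
      push_cast
      field_simp
      ring
    rw [e1, hc k, Finset.mul_sum, Finset.mul_sum]
    refine Finset.sum_congr rfl fun m _ => ?_
    have e2 : Complex.exp (-Complex.I * (k : ℂ) * (y m : ℂ)) =
        Complex.exp (-Complex.I * k * (π * q * x / p)) *
        Complex.exp (2 * π * Complex.I * ((m.val : ℂ) * k) / (2 * p : ℕ)) := by
      rw [← Complex.exp_add]
      congr 1
      simp only [y]
      push_cast
      field_simp
      ring
    rw [e2]
    ring
  simp_rw [key]
  rw [Summable.tsum_finsetSum]
  · refine Finset.sum_eq_zero fun m _ => ?_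
    rw [tsum_mul_left, hsupp (y m), mul_zero]
    intro n
    have h := hx (m.val + 2 * p * n)
    have e3 : y m - 2 * π * n = (π * q / p) * (x - ((m.val + 2 * p * n : ℤ) : ℝ) / q) := by
      simp only [y]
      push_cast
      field_simp
      ring
    have hpos : 0 < π * q / p := by positivity
    rw [e3, abs_mul, abs_of_pos hpos]
    calc η * π / p = (π * q / p) * (η / q) := by field_simp
      _ ≤ _ := mul_le_mul_of_nonneg_left h.le hpos.le
  · intro m _
    apply Summable.mul_left
    apply Summable.of_norm
    exact hα.congr fun k => (hb k (y m)).symm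
end
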